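/- arXiv:2511.17650 — 6 statements merged into one kernel-verified Lean document; each statement's English description precedes it below -/
import Mathlib

section
/- For all n, k ∈ ℕ: for every j < k, C^j(n + 2^k) ≡ C^j(n) (mod 2) (so the length-k parity vectors of n and n + 2^k coincide), while C^k(n + 2^k) and C^k(n) have opposite parities, i.e., C^k(n + 2^k) mod 2 = 1 − (C^k(n) mod 2). -/
/-!
On each parity class `C` is affine in `n / 2` with odd slope (`1` or `α`), so adding `2 * m` to the
argument adds an odd multiple of `m` to the value. Composing, adding `2 ^ j * m` to the argument
adds an odd multiple of `m` to the value of `C^[j]`. For `m = 2 ^ (k - j)` this keeps the parity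
when `j < k` and flips it when `j = k`.
-/

/-- Shifting the argument of `f` by a multiple `d * m` of `d` shifts its value by an odd multiple of
`m`. The odd factor may depend on both `n` and `m`. For `d = 2` this is the property of the Collatz
maps that governs the parities along their orbits. -/
def HasOddIncrements (f : ℕ → ℕ) (d : ℕ) : Prop :=
  ∀ n m, ∃ γ, Odd γ ∧ f (n + d * m) = f n + γ * m

namespace HasOddIncrements

variable {f g : ℕ → ℕ} {d e m : ℕ}

theorem id_one : HasOddIncrements id 1 :=
  fun _ _ => ⟨1, odd_one, rfl⟩

theorem comp (hg : HasOddIncrements g e) (hf : HasOddIncrements f d) :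
    HasOddIncrements (g ∘ f) (d * e) := by
  intro n m
  obtain ⟨γ, hγ, hfγ⟩ := hf n (e * m)
  obtain ⟨δ, hδ, hgδ⟩ := hg (f n) (γ * m)
  refine ⟨δ * γ, hδ.mul hγ, ?_⟩
  calc g (f (n + d * e * m)) = g (f n + e * (γ * m)) := by
        rw [mul_assoc, hfγ, mul_left_comm]
    _ = g (f n) + δ * γ * m := by rw [hgδ, mul_assoc]

theorem iterate (hf : HasOddIncrements f d) (j : ℕ) : HasOddIncrements f^[j] (d ^ j) := by
  induction j with
  | zero => exact id_one
  | succ j ih =>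
    rw [Function.iterate_succ', pow_succ]
    exact hf.comp ih

theorem mod_two_eq_of_even (hf : HasOddIncrements f d) (n : ℕ) (hm : Even m) :
    f (n + d * m) % 2 = f n % 2 := by
  obtain ⟨γ, -, hfγ⟩ := hf n m
  have hγm : Even (γ * m) := hm.mul_left γ
  rw [hfγ, Nat.add_mod, Nat.even_iff.mp hγm, add_zero, Nat.mod_mod]

theorem mod_two_eq_one_sub_of_odd (hf : HasOddIncrements f d) (n : ℕ) (hm : Odd m) :
    f (n + d * m) % 2 = 1 - f n % 2 := by
  obtain ⟨γ, hγ, hfγ⟩ := hf n m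
  have hγm : γ * m % 2 = 1 := Nat.odd_iff.mp (hγ.mul hm)
  omega

end HasOddIncrements

theorem hasOddIncrements_two_of_collatz {α β : ℕ} (hα : Odd α) {C : ℕ → ℕ}
    (hC : ∀ n : ℕ, C n = if n % 2 = 0 then n / 2 else (α * n + β) / 2) :
    HasOddIncrements C 2 := by
  intro n m
  rw [hC, hC n, Nat.add_mul_mod_self_left]
  split_ifs with hn
  · refine ⟨1, odd_one, ?_⟩
    rw [Nat.add_mul_div_left _ _ two_pos, one_mul]
  · refine ⟨α, hα, ?_⟩
    have hshift : α * (n + 2 * m) + β = α * n + β + 2 * (α * m) := by ring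
    rw [hshift, Nat.add_mul_div_left _ _ two_pos]

theorem collatz_parity_vector_shift_general {C : ℕ → ℕ} (hC : HasOddIncrements C 2)
    {c : ℕ} (hc : Odd c) (n k : ℕ) :
    (∀ j < k, C^[j] (n + 2 ^ k * c) % 2 = C^[j] n % 2) ∧
    C^[k] (n + 2 ^ k * c) % 2 = 1 - C^[k] n % 2 := by
  refine ⟨fun j hj => ?_, (hC.iterate k).mod_two_eq_one_sub_of_odd n hc⟩
  have heven : Even (2 ^ (k - j) * c) :=
    (even_two.pow_of_ne_zero (Nat.sub_ne_zero_of_lt hj)).mul_right c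
  rw [← pow_mul_pow_sub 2 hj.le, mul_assoc]
  exact (hC.iterate j).mod_two_eq_of_even n heven

/-- parity vectors of n and n + 2^k agree up to step k-1, and the
parities of C^k(n + 2^k) and C^k(n) are opposite. -/
theorem collatz_parity_vector_shift
    (α β : ℕ) (hα : Odd α) (hα0 : 0 < α) (hβ : Odd β) (hβ0 : 0 < β)
    (hgcd : Nat.gcd α β = 1) (C : ℕ → ℕ)
    (hC : ∀ n : ℕ, C n = if n % 2 = 0 then n / 2 else (α * n + β) / 2)
    (n k : ℕ) :
    (∀ j < k, C^[j] (n + 2 ^ k) % 2 = C^[j] n % 2) ∧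
    C^[k] (n + 2 ^ k) % 2 = 1 - C^[k] n % 2 := by
  simpa only [mul_one] using
    collatz_parity_vector_shift_general (hasOddIncrements_two_of_collatz hα hC) odd_one n k
end

section
/- For every k ∈ ℕ, the parity-vector map n ↦ P_k(n) = (C^0(n) mod 2, …, C^{k−1}(n) mod 2), restricted to the integers n with 1 ≤ n ≤ 2^k, is a bijection onto {0,1}^k. -/
/-!
A Collatz step can be undone modulo powers of two: if `m` and `n` have the same parity, then
`2 * C m` and `2 * C n` are the images of `m` and `n` under one affine map with odd slope (`1` or
`α`), so a congruence `C m ≡ C n` modulo `2 ^ k` lifts to `m ≡ n` modulo `2 ^ (k + 1)`. Inductively,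
the parity vector of length `k` determines `n` modulo `2 ^ k`, hence is injective on any `2 ^ k`
consecutive integers, and there are exactly `2 ^ k` vectors to hit.
-/

/-- The generalized Collatz map `C_{α,β}`. The division in the odd branch is exact only when
`α * n + β` is even, as it is for odd `α` and `β`. -/
def collatzMap (α β n : ℕ) : ℕ :=
  if n % 2 = 0 then n / 2 else (α * n + β) / 2

/-- The length-`k` parity vector of `n` along the orbit of an arbitrary self-map `f` of `ℕ`, with
parities as elements of `ZMod 2`. -/
def parityVector (f : ℕ → ℕ) (k n : ℕ) : Fin k → ZMod 2 :=
  fun j => (f^[j] n : ZMod 2)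

section ParityVector

variable {f : ℕ → ℕ} {k m n : ℕ}

theorem parityVector_succ (f : ℕ → ℕ) (k n : ℕ) :
    parityVector f (k + 1) n = Fin.cons (n : ZMod 2) (parityVector f k (f n)) := by
  funext j
  cases j using Fin.cases <;> rfl

theorem parityVector_succ_eq_iff :
    parityVector f (k + 1) m = parityVector f (k + 1) n ↔
      m ≡ n [MOD 2] ∧ parityVector f k (f m) = parityVector f k (f n) := by
  rw [parityVector_succ, parityVector_succ, Fin.cons_inj, ZMod.natCast_eq_natCast_iff]

theorem modEq_two_pow_of_parityVector_eq
    (hlift : ∀ k m n, m ≡ n [MOD 2] → f m ≡ f n [MOD 2 ^ k] → m ≡ n [MOD 2 ^ (k + 1)])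
    (h : parityVector f k m = parityVector f k n) : m ≡ n [MOD 2 ^ k] := by
  induction k generalizing m n with
  | zero => exact Nat.modEq_one
  | succ k ih =>
    obtain ⟨same_parity, tail_eq⟩ := parityVector_succ_eq_iff.1 h
    exact hlift k m n same_parity (ih tail_eq)

theorem bijOn_parityVector_Ico
    (h : ∀ m n, parityVector f k m = parityVector f k n → m ≡ n [MOD 2 ^ k]) (a : ℕ) :
    Set.BijOn (parityVector f k) (Set.Ico a (a + 2 ^ k)) Set.univ := by
  have injOn : Set.InjOn (parityVector f k) (Finset.Ico a (a + 2 ^ k)) :=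
    fun m hm n hn hmn => Nat.mod_injOn_Ico a (2 ^ k) hm hn (h m n hmn)
  have surjOn : Set.SurjOn (parityVector f k) (Finset.Ico a (a + 2 ^ k))
      (Finset.univ : Finset (Fin k → ZMod 2)) :=
    Finset.surjOn_of_injOn_of_card_le _ (by simp [Set.mapsTo_univ]) injOn
      (by simp)
  rw [Finset.coe_Ico] at injOn surjOn
  rw [Finset.coe_univ] at surjOn
  exact ⟨Set.mapsTo_univ _ _, injOn, surjOn⟩

end ParityVector

section CollatzMap

variable {α β n : ℕ}

theorem two_mul_collatzMap_of_even (α β : ℕ) (hn : Even n) : 2 * collatzMap α β n = n := by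
  rw [collatzMap, if_pos (Nat.even_iff.1 hn), Nat.two_mul_div_two_of_even hn]

theorem two_mul_collatzMap_of_odd (hα : Odd α) (hβ : Odd β) (hn : Odd n) :
    2 * collatzMap α β n = α * n + β := by
  rw [collatzMap, if_neg (Nat.odd_iff.1 hn ▸ one_ne_zero),
    Nat.two_mul_div_two_of_even ((hα.mul hn).add_odd hβ)]

theorem modEq_two_pow_succ_of_collatzMap_modEq (hα : Odd α) (hβ : Odd β) (k m n : ℕ)
    (same_parity : m ≡ n [MOD 2]) (h : collatzMap α β m ≡ collatzMap α β n [MOD 2 ^ k]) :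
    m ≡ n [MOD 2 ^ (k + 1)] := by
  have doubled : 2 * collatzMap α β m ≡ 2 * collatzMap α β n [MOD 2 ^ (k + 1)] := by
    rw [pow_succ']
    exact h.mul_left' 2
  rcases Nat.even_or_odd m with m_even | m_odd
  · have n_even : Even n := Nat.even_iff.2 (same_parity ▸ Nat.even_iff.1 m_even)
    rwa [two_mul_collatzMap_of_even α β m_even, two_mul_collatzMap_of_even α β n_even] at doubled
  · have n_odd : Odd n := Nat.odd_iff.2 (same_parity ▸ Nat.odd_iff.1 m_odd)
    rw [two_mul_collatzMap_of_odd hα hβ m_odd, two_mul_collatzMap_of_odd hα hβ n_odd] at doubled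
    have coprime : Nat.Coprime (2 ^ (k + 1)) α :=
      Nat.Coprime.pow_left _ (Nat.coprime_two_left.2 hα)
    exact (doubled.add_right_cancel' β).cancel_left_of_coprime coprime

theorem collatz_parity_vector_bijective_general (hα : Odd α) (hβ : Odd β) (k a : ℕ) :
    Set.BijOn (parityVector (collatzMap α β) k) (Set.Ico a (a + 2 ^ k)) Set.univ :=
  bijOn_parityVector_Ico
    (fun _ _ => modEq_two_pow_of_parityVector_eq (modEq_two_pow_succ_of_collatzMap_modEq hα hβ)) a

end CollatzMap

/-- the length-k parity-vector map is a bijection from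
[1, 2^k] onto {0,1}^k (modelled as Fin k → ZMod 2). -/
theorem collatz_parity_vector_bijective
    (α β : ℕ) (hα : Odd α) (hα0 : 0 < α) (hβ : Odd β) (hβ0 : 0 < β)
    (hgcd : Nat.gcd α β = 1) (C : ℕ → ℕ)
    (hC : ∀ n : ℕ, C n = if n % 2 = 0 then n / 2 else (α * n + β) / 2)
    (k : ℕ) :
    Set.BijOn (fun n : ℕ => fun j : Fin k => ((C^[(j : ℕ)] n : ℕ) : ZMod 2))
      (Set.Icc 1 (2 ^ k)) (Set.univ : Set (Fin k → ZMod 2)) := by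
  obtain rfl : C = collatzMap α β := funext hC
  rw [← Set.Ico_add_one_right_eq_Icc, add_comm]
  exact collatz_parity_vector_bijective_general hα hβ k 1
end

section
/- For every u ∈ H one has ‖u‖ ≤ ‖𝐂u‖ ≤ √2·‖u‖. -/
/-!
Every `m` has the preimage `2 * m` under the Collatz map, so `u` is a subsequence of `𝐂 u`. The odd
preimages of `m` are the solutions of a linear equation with leading coefficient `α ≠ 0`, so `m` has
at most two preimages, and each `‖u m‖ ^ p` occurs at most twice in the series for `‖𝐂 u‖ ^ p`.
-/

section FiniteFibers

variable {ι κ : Type*} {f : κ → ι} {N : ℕ}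

theorem sum_comp_le_nsmul_sum_image_of_encard_fiber_le {M : Type*} [AddCommMonoid M]
    [PartialOrder M] [IsOrderedAddMonoid M] [DecidableEq ι]
    (hf : ∀ i, (f ⁻¹' {i}).encard ≤ N) {w : ι → M} (hw : ∀ i, 0 ≤ w i) (s : Finset κ) :
    ∑ j ∈ s, w (f j) ≤ N • ∑ i ∈ s.image f, w i := by
  have card_le (i : ι) : (s.filter (f · = i)).card ≤ N := by
    have h : ((s.filter (f · = i) : Finset κ) : Set κ) ⊆ f ⁻¹' {i} := by
      intro j hj
      simpa using (Finset.mem_filter.mp hj).2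
    exact_mod_cast (Set.encard_coe_eq_coe_finsetCard _ ▸ Set.encard_le_encard h).trans (hf i)
  calc ∑ j ∈ s, w (f j)
      = ∑ i ∈ s.image f, (s.filter (f · = i)).card • w i := Finset.sum_comp w f
    _ ≤ ∑ i ∈ s.image f, N • w i :=
        Finset.sum_le_sum fun i _ => nsmul_le_nsmul_left (hw i) (card_le i)
    _ = N • ∑ i ∈ s.image f, w i := (Finset.smul_sum ..).symm

variable {E : ι → Type*} {F : κ → Type*} [∀ i, NormedAddCommGroup (E i)]
  [∀ j, NormedAddCommGroup (F j)] {p : ENNReal} {u : lp E p} {v : lp F p}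

theorem lp_norm_le_of_encard_fiber_le (hp : 0 < p.toReal) (hf : ∀ i, (f ⁻¹' {i}).encard ≤ N)
    (hvu : ∀ j, ‖v j‖ ≤ ‖u (f j)‖) : ‖v‖ ≤ (N : ℝ) ^ (1 / p.toReal) * ‖u‖ := by
  classical
  have hu : 0 ≤ ‖u‖ := lp.norm_nonneg' u
  refine lp.norm_le_of_forall_sum_le hp (by positivity) fun s => ?_
  calc ∑ j ∈ s, ‖v j‖ ^ p.toReal
      ≤ ∑ j ∈ s, ‖u (f j)‖ ^ p.toReal := by gcongr with j; exact hvu j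
    _ ≤ N • ∑ i ∈ s.image f, ‖u i‖ ^ p.toReal :=
        sum_comp_le_nsmul_sum_image_of_encard_fiber_le hf
          (w := fun i => ‖u i‖ ^ p.toReal) (fun i => by positivity) s
    _ ≤ N • ‖u‖ ^ p.toReal := by gcongr; exact lp.sum_rpow_le_norm_rpow hp u _
    _ = ((N : ℝ) ^ (1 / p.toReal) * ‖u‖) ^ p.toReal := by
        rw [Real.mul_rpow (by positivity) hu, one_div, Real.rpow_inv_rpow N.cast_nonneg hp.ne',
          nsmul_eq_mul]

theorem lp_norm_le_of_injective (hp : 0 < p.toReal) (hf : f.Injective)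
    (hvu : ∀ j, ‖v j‖ ≤ ‖u (f j)‖) : ‖v‖ ≤ ‖u‖ := by
  have fiber_le (i : ι) : (f ⁻¹' {i}).encard ≤ (1 : ℕ) :=
    Set.encard_le_one_iff_subsingleton.mpr (Set.subsingleton_singleton.preimage hf)
  simpa using lp_norm_le_of_encard_fiber_le hp fiber_le hvu

end FiniteFibers

section CollatzMap

variable (α β : ℕ)

theorem collatzMap_two_mul (k : ℕ) : collatzMap α β (2 * k) = k := by
  simp [collatzMap]

theorem collatzMap_two_mul_add_one (k : ℕ) :
    collatzMap α β (2 * k + 1) = α * k + (α + β) / 2 := by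
  have h : α * (2 * k + 1) + β = α + β + 2 * (α * k) := by ring
  rw [collatzMap, if_neg (by omega), h, Nat.add_mul_div_left _ _ two_pos, add_comm]

variable {α}

theorem injective_collatzMap_two_mul_add_one (hα : 0 < α) :
    Function.Injective fun k => collatzMap α β (2 * k + 1) := by
  intro k l h
  simp only [collatzMap_two_mul_add_one] at h
  exact Nat.eq_of_mul_eq_mul_left hα (Nat.add_right_cancel h)

theorem encard_collatzMap_fiber_le_two (hα : 0 < α) (m : ℕ) :
    (collatzMap α β ⁻¹' {m}).encard ≤ 2 := by
  let oddPreimages := {k | collatzMap α β (2 * k + 1) = m}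
  have oddPreimages_subsingleton : oddPreimages.Subsingleton := fun k hk l hl =>
    injective_collatzMap_two_mul_add_one β hα (hk.trans hl.symm)
  have fiber_subset :
      collatzMap α β ⁻¹' {m} ⊆ insert (2 * m) ((fun k => 2 * k + 1) '' oddPreimages) := by
    intro n hn
    rcases Nat.even_or_odd' n with ⟨k, rfl | rfl⟩
    · exact .inl (congrArg (2 * ·) ((collatzMap_two_mul α β k).symm.trans hn))
    · exact .inr ⟨k, hn, rfl⟩
  calc (collatzMap α β ⁻¹' {m}).encard
      ≤ (insert (2 * m) ((fun k => 2 * k + 1) '' oddPreimages)).encard :=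
        Set.encard_le_encard fiber_subset
    _ ≤ ((fun k => 2 * k + 1) '' oddPreimages).encard + 1 := Set.encard_insert_le _ _
    _ ≤ 1 + 1 := by
        gcongr
        exact Set.encard_le_one_iff_subsingleton.mpr (oddPreimages_subsingleton.image _)
    _ = 2 := one_add_one_eq_two

end CollatzMap

theorem collatz_operator_norm_bounds_general {E : Type*} [NormedAddCommGroup E] {p : ENNReal}
    (hp : 0 < p.toReal) {α : ℕ} (hα : 0 < α) (β : ℕ) {u v : lp (fun _ : ℕ => E) p}
    (hv : ∀ n, v n = u (collatzMap α β n)) :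
    ‖u‖ ≤ ‖v‖ ∧ ‖v‖ ≤ 2 ^ (1 / p.toReal) * ‖u‖ := by
  constructor
  · have hu (k : ℕ) : u k = v (2 * k) := by rw [hv, collatzMap_two_mul]
    exact lp_norm_le_of_injective hp (mul_right_injective₀ two_ne_zero) fun k => by rw [hu]
  · exact lp_norm_le_of_encard_fiber_le hp (encard_collatzMap_fiber_le_two β hα)
      fun n => by rw [hv]

/-- ‖u‖ ≤ ‖𝐂u‖ ≤ √2·‖u‖ for the Collatz operator on ℓ². -/
theorem collatz_operator_norm_bounds
    (α β : ℕ) (hα : Odd α) (hα0 : 0 < α) (hβ : Odd β) (hβ0 : 0 < β)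
    (hgcd : Nat.gcd α β = 1) (C : ℕ → ℕ)
    (hC : ∀ n : ℕ, C n = if n % 2 = 0 then n / 2 else (α * n + β) / 2)
    (T : lp (fun _ : ℕ => ℂ) 2 →L[ℂ] lp (fun _ : ℕ => ℂ) 2)
    (hT : ∀ (u : lp (fun _ : ℕ => ℂ) 2) (n : ℕ), T u n = u (C n))
    (u : lp (fun _ : ℕ => ℂ) 2) :
    ‖u‖ ≤ ‖T u‖ ∧ ‖T u‖ ≤ Real.sqrt 2 * ‖u‖ := by
  obtain rfl : C = collatzMap α β := funext hC
  simpa [Real.sqrt_eq_rpow] using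
    collatz_operator_norm_bounds_general (p := 2) (by norm_num) hα0 β (hT u)
end

section
/- (1) If u ∈ H satisfies u(m) = 0 for every m ∈ ℕ admitting an odd preimage under C (i.e., for every m such that there exists an odd j ∈ ℕ with αj+β = 2m), then ‖𝐂u‖ = ‖u‖. (2) If u ∈ H satisfies u(m) = 0 for every m ∈ ℕ admitting no odd preimage under C, then ‖𝐂u‖ = √2·‖u‖. (3) The operator norm of 𝐂 equals √2. -/
/-!
Grouping the terms `‖u (f i)‖ ^ p` of the `ℓᵖ`-norm of `u ∘ f` along the fibers of `f` gives
`‖u ∘ f‖ ^ p = ∑ m, #(f ⁻¹' {m}) * ‖u m‖ ^ p`. Under the Collatz map the fiber over `m` consists of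
`2 * m` and, when `m` has an odd preimage, exactly one further point. Hence composition scales
`‖u‖ ^ p` by `1` or by `2` when `u` is supported on fibers of one kind, and by at most `2` in
general.
-/

open scoped ENNReal

section CompositionOnLp

-- An infinite fiber has `ncard` zero, but there summability forces `g m = 0` anyway.
theorem hasSum_ncard_fiber_nsmul {ι κ G : Type*} [AddCommGroup G] [UniformSpace G]
    [IsUniformAddGroup G] [CompleteSpace G] [T2Space G] {f : ι → κ} {g : κ → G} {a : G}
    (h : HasSum (fun i => g (f i)) a) :
    HasSum (fun m => (f ⁻¹' {m}).ncard • g m) a := by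
  have tsum_fiber (m : κ) : ∑' i : f ⁻¹' {m}, g (f i) = (f ⁻¹' {m}).ncard • g m :=
    calc ∑' i : f ⁻¹' {m}, g (f i) = ∑' _ : f ⁻¹' {m}, g m :=
          tsum_congr fun i => congrArg g i.2
      _ = (f ⁻¹' {m}).ncard • g m := by rw [tsum_const, Nat.card_coe_set_eq]
  simpa only [tsum_fiber] using h.tsum_fiberwise f

theorem rpow_inv_mul_rpow {a b r : ℝ} (ha : 0 ≤ a) (hb : 0 ≤ b) (hr : r ≠ 0) :
    (a ^ r⁻¹ * b) ^ r = a * b ^ r := by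
  rw [Real.mul_rpow (Real.rpow_nonneg ha _) hb, Real.rpow_inv_rpow ha hr]

variable {ι κ E : Type*} [NormedAddCommGroup E] {p : ℝ≥0∞} {f : ι → κ} {k : ℕ}

section Norm

variable {u : lp (fun _ : κ => E) p} {v : lp (fun _ : ι => E) p}

theorem hasSum_ncard_fiber_mul_norm_rpow (hp : 0 < p.toReal) (hv : ∀ i, v i = u (f i)) :
    HasSum (fun m => ((f ⁻¹' {m}).ncard : ℝ) * ‖u m‖ ^ p.toReal) (‖v‖ ^ p.toReal) := by
  have hsum : HasSum (fun i => ‖u (f i)‖ ^ p.toReal) (‖v‖ ^ p.toReal) := by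
    simpa only [hv] using lp.hasSum_norm hp v
  simpa only [nsmul_eq_mul] using
    hasSum_ncard_fiber_nsmul (g := fun m => ‖u m‖ ^ p.toReal) hsum

theorem norm_comp_eq_of_ncard_fiber_eq (hp : 0 < p.toReal) (hv : ∀ i, v i = u (f i))
    (hk : ∀ m, u m ≠ 0 → (f ⁻¹' {m}).ncard = k) :
    ‖v‖ = (k : ℝ) ^ p.toReal⁻¹ * ‖u‖ := by
  have term_eq (m : κ) :
      ((f ⁻¹' {m}).ncard : ℝ) * ‖u m‖ ^ p.toReal = k * ‖u m‖ ^ p.toReal := by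
    by_cases hm : u m = 0
    · simp [hm, Real.zero_rpow hp.ne']
    · rw [hk m hm]
  have hsum := hasSum_ncard_fiber_mul_norm_rpow hp hv
  simp only [term_eq] at hsum
  rw [← Real.rpow_left_inj (lp.norm_nonneg' v)
    (mul_nonneg (by positivity) (lp.norm_nonneg' u)) hp.ne',
    rpow_inv_mul_rpow k.cast_nonneg (lp.norm_nonneg' u) hp.ne']
  exact hsum.unique ((lp.hasSum_norm hp u).mul_left _)

theorem norm_comp_le_of_ncard_fiber_le (hp : 0 < p.toReal) (hv : ∀ i, v i = u (f i))
    (hk : ∀ m, (f ⁻¹' {m}).ncard ≤ k) :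
    ‖v‖ ≤ (k : ℝ) ^ p.toReal⁻¹ * ‖u‖ := by
  rw [← Real.rpow_le_rpow_iff (lp.norm_nonneg' v)
    (mul_nonneg (by positivity) (lp.norm_nonneg' u)) hp,
    rpow_inv_mul_rpow k.cast_nonneg (lp.norm_nonneg' u) hp.ne']
  refine hasSum_le (fun m => ?_) (hasSum_ncard_fiber_mul_norm_rpow hp hv)
    ((lp.hasSum_norm hp u).mul_left _)
  gcongr
  exact hk m

end Norm

theorem exists_lp_ne_zero_supported_at [Nontrivial E] (p : ℝ≥0∞) (m : κ) :
    ∃ δ : lp (fun _ : κ => E) p, δ ≠ 0 ∧ ∀ n, δ n ≠ 0 → n = m := by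
  classical
  obtain ⟨x, hx⟩ := exists_ne (0 : E)
  refine ⟨lp.single p m x, fun h => hx ?_, fun n => not_imp_comm.mp fun hne =>
    lp.single_apply_ne (E := fun _ : κ => E) p m x hne⟩
  rw [← lp.single_apply_self (E := fun _ : κ => E) p m x, h, lp.coeFn_zero, Pi.zero_apply]

variable {𝕜 : Type*} [NontriviallyNormedField 𝕜] [NormedSpace 𝕜 E] [Fact (1 ≤ p)]
  {T : lp (fun _ : κ => E) p →L[𝕜] lp (fun _ : ι => E) p}

theorem le_opNorm_comp_of_ncard_fiber_eq [Nontrivial E] (hp : 0 < p.toReal)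
    (hT : ∀ u i, T u i = u (f i)) {m : κ} (hm : (f ⁻¹' {m}).ncard = k) :
    (k : ℝ) ^ p.toReal⁻¹ ≤ ‖T‖ := by
  obtain ⟨δ, δ_ne_zero, δ_support⟩ := exists_lp_ne_zero_supported_at (E := E) p m
  have norm_T_δ : ‖T δ‖ = (k : ℝ) ^ p.toReal⁻¹ * ‖δ‖ :=
    norm_comp_eq_of_ncard_fiber_eq hp (hT δ) fun n hn => by rw [δ_support n hn, hm]
  exact le_of_mul_le_mul_right (norm_T_δ.symm.trans_le (T.le_opNorm δ))
    (norm_pos_iff.mpr δ_ne_zero)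

theorem opNorm_comp_eq_of_ncard_fiber [Nontrivial E] (hp : 0 < p.toReal)
    (hT : ∀ u i, T u i = u (f i)) (hle : ∀ m, (f ⁻¹' {m}).ncard ≤ k)
    (hmax : ∃ m, (f ⁻¹' {m}).ncard = k) :
    ‖T‖ = (k : ℝ) ^ p.toReal⁻¹ := by
  obtain ⟨m, hm⟩ := hmax
  exact le_antisymm
    (T.opNorm_le_bound (by positivity) fun u => norm_comp_le_of_ncard_fiber_le hp (hT u) hle)
    (le_opNorm_comp_of_ncard_fiber_eq hp hT hm)

end CompositionOnLp

/-- The generalized Collatz map `C_{α,β}`. The division `(α * n + β) / 2` is exact for odd `n`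
precisely when `α + β` is even. -/
def generalizedCollatz (α β n : ℕ) : ℕ :=
  if n % 2 = 0 then n / 2 else (α * n + β) / 2

/-- `m` is the image of an odd number under the generalized Collatz map. The equation is doubled
to avoid truncated division. -/
def HasOddPreimage (α β m : ℕ) : Prop :=
  ∃ j : ℕ, j % 2 = 1 ∧ α * j + β = 2 * m

section Fibers

variable {α β m : ℕ}

theorem generalizedCollatz_eq_iff (hαβ : Even (α + β)) {n : ℕ} :
    generalizedCollatz α β n = m ↔ n = 2 * m ∨ n % 2 = 1 ∧ α * n + β = 2 * m := by
  unfold generalizedCollatz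
  split_ifs
  · omega
  · have even_image : Even (α * n + β) := by
      have n_odd : Odd n := Nat.odd_iff.mpr (by omega)
      simpa [Nat.even_add, Nat.even_mul, Nat.not_even_iff_odd.mpr n_odd] using hαβ
    obtain ⟨c, hc⟩ := even_image
    omega

theorem ncard_generalizedCollatz_fiber_eq_two (hα : α ≠ 0) (hαβ : Even (α + β))
    (hm : HasOddPreimage α β m) : (generalizedCollatz α β ⁻¹' {m}).ncard = 2 := by
  obtain ⟨j, hj, hjm⟩ := hm
  refine Set.ncard_eq_two.mpr ⟨2 * m, j, by omega, Set.ext fun n => ?_⟩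
  have odd_preimage_unique : n % 2 = 1 ∧ α * n + β = 2 * m ↔ n = j := by
    refine ⟨fun ⟨_, hnm⟩ => ?_, by rintro rfl; exact ⟨hj, hjm⟩⟩
    exact Nat.eq_of_mul_eq_mul_left (Nat.pos_of_ne_zero hα)
      (Nat.add_right_cancel (hnm.trans hjm.symm))
  simp only [Set.mem_preimage, Set.mem_singleton_iff, Set.mem_insert_iff,
    generalizedCollatz_eq_iff hαβ, odd_preimage_unique]

theorem ncard_generalizedCollatz_fiber_eq_one (hαβ : Even (α + β))
    (hm : ¬HasOddPreimage α β m) : (generalizedCollatz α β ⁻¹' {m}).ncard = 1 := by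
  refine Set.ncard_eq_one.mpr ⟨2 * m, Set.ext fun n => ?_⟩
  have not_odd_preimage : ¬(n % 2 = 1 ∧ α * n + β = 2 * m) := fun hn => hm ⟨n, hn⟩
  simp only [Set.mem_preimage, Set.mem_singleton_iff, generalizedCollatz_eq_iff hαβ,
    not_odd_preimage, or_false]

theorem ncard_generalizedCollatz_fiber_le_two (hα : α ≠ 0) (hαβ : Even (α + β)) (m : ℕ) :
    (generalizedCollatz α β ⁻¹' {m}).ncard ≤ 2 := by
  by_cases hm : HasOddPreimage α β m
  · exact (ncard_generalizedCollatz_fiber_eq_two hα hαβ hm).le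
  · exact (ncard_generalizedCollatz_fiber_eq_one hαβ hm).trans_le one_le_two

theorem exists_hasOddPreimage (hαβ : Even (α + β)) : ∃ m, HasOddPreimage α β m := by
  obtain ⟨m, hm⟩ := hαβ
  exact ⟨m, 1, rfl, by omega⟩

end Fibers

theorem collatz_operator_isometry_and_norm_general
    {𝕜 E : Type*} [NontriviallyNormedField 𝕜] [NormedAddCommGroup E] [NormedSpace 𝕜 E]
    [Nontrivial E] {p : ℝ≥0∞} [Fact (1 ≤ p)] (hp : p ≠ ∞)
    {α β : ℕ} (hα : α ≠ 0) (hαβ : Even (α + β))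
    (T : lp (fun _ : ℕ => E) p →L[𝕜] lp (fun _ : ℕ => E) p)
    (hT : ∀ u n, T u n = u (generalizedCollatz α β n)) :
    (∀ u : lp (fun _ : ℕ => E) p, (∀ m, HasOddPreimage α β m → u m = 0) → ‖T u‖ = ‖u‖) ∧
    (∀ u : lp (fun _ : ℕ => E) p, (∀ m, ¬HasOddPreimage α β m → u m = 0) →
      ‖T u‖ = (2 : ℝ) ^ p.toReal⁻¹ * ‖u‖) ∧
    ‖T‖ = (2 : ℝ) ^ p.toReal⁻¹ := by
  have hp_pos : 0 < p.toReal :=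
    ENNReal.toReal_pos (zero_lt_one.trans_le (Fact.out : 1 ≤ p)).ne' hp
  refine ⟨fun u hu => ?_, fun u hu => ?_, ?_⟩
  · have fiber_card (m : ℕ) (hm : u m ≠ 0) : (generalizedCollatz α β ⁻¹' {m}).ncard = 1 :=
      ncard_generalizedCollatz_fiber_eq_one hαβ (mt (hu m) hm)
    simpa using norm_comp_eq_of_ncard_fiber_eq hp_pos (hT u) fiber_card
  · have fiber_card (m : ℕ) (hm : u m ≠ 0) : (generalizedCollatz α β ⁻¹' {m}).ncard = 2 :=
      ncard_generalizedCollatz_fiber_eq_two hα hαβ (not_imp_comm.mp (hu m) hm)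
    exact_mod_cast norm_comp_eq_of_ncard_fiber_eq hp_pos (hT u) fiber_card
  · have fiber_max : ∃ m, (generalizedCollatz α β ⁻¹' {m}).ncard = 2 :=
      (exists_hasOddPreimage hαβ).imp fun _ => ncard_generalizedCollatz_fiber_eq_two hα hαβ
    exact_mod_cast
      opNorm_comp_eq_of_ncard_fiber hp_pos hT
        (ncard_generalizedCollatz_fiber_le_two hα hαβ) fiber_max

/-- isometry of 𝐂 on sequences vanishing at frequencies with an odd
preimage, the factor √2 on sequences supported on frequencies with an odd
preimage, and the operator norm of 𝐂 equals √2. -/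
theorem collatz_operator_isometry_and_norm
    (α β : ℕ) (hα : Odd α) (hα0 : 0 < α) (hβ : Odd β) (hβ0 : 0 < β)
    (hgcd : Nat.gcd α β = 1) (C : ℕ → ℕ)
    (hC : ∀ n : ℕ, C n = if n % 2 = 0 then n / 2 else (α * n + β) / 2)
    (T : lp (fun _ : ℕ => ℂ) 2 →L[ℂ] lp (fun _ : ℕ => ℂ) 2)
    (hT : ∀ (u : lp (fun _ : ℕ => ℂ) 2) (n : ℕ), T u n = u (C n)) :
    (∀ u : lp (fun _ : ℕ => ℂ) 2,
      (∀ m : ℕ, (∃ j : ℕ, j % 2 = 1 ∧ α * j + β = 2 * m) → u m = 0) →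
      ‖T u‖ = ‖u‖) ∧
    (∀ u : lp (fun _ : ℕ => ℂ) 2,
      (∀ m : ℕ, ¬ (∃ j : ℕ, j % 2 = 1 ∧ α * j + β = 2 * m) → u m = 0) →
      ‖T u‖ = Real.sqrt 2 * ‖u‖) ∧
    ‖T‖ = Real.sqrt 2 := by
  obtain rfl : C = generalizedCollatz α β := funext hC
  simpa only [HasOddPreimage, Real.sqrt_eq_rpow, one_div, ENNReal.toReal_ofNat] using
    collatz_operator_isometry_and_norm_general ENNReal.ofNat_ne_top hα0.ne' (hα.add_odd hβ) T hT
end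

section
/- (1) 𝐂 is injective and its range is closed in H. (2) The operator 𝐂* ∘ 𝐂 : H → H, where 𝐂* denotes the Hilbert-space adjoint of 𝐂, is bijective. -/
/-!
Composition with a surjection `φ` does not decrease the `ℓᵖ` norm, because every value of `u` occurs
among the values of `u ∘ φ`. For `p = 2` the composition operator `T` is therefore bounded below,
hence injective with closed range, and `⟪T† T u, u⟫ = ‖T u‖² ≥ ‖u‖²` makes `T† T` coercive, hence
invertible. The Collatz map is surjective since it sends `2 * n` to `n`.
-/

open scoped ENNReal NNReal

section lpNorm

variable {ι κ : Type*} {p : ℝ≥0∞}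

theorem lp_norm_le_norm_of_injective {E : κ → Type*} {F : ι → Type*}
    [∀ k, NormedAddCommGroup (E k)] [∀ i, NormedAddCommGroup (F i)]
    {σ : κ → ι} (hσ : Function.Injective σ) {u : lp E p} {v : lp F p}
    (huv : ∀ k, ‖u k‖ ≤ ‖v (σ k)‖) : ‖u‖ ≤ ‖v‖ := by
  rcases p.trichotomy with rfl | rfl | hp
  · have hmaps : Set.MapsTo σ {k | u k ≠ 0} {i | v i ≠ 0} := fun k hk ↦
      norm_pos_iff.1 ((norm_pos_iff.2 hk).trans_le (huv k))
    rw [lp.norm_eq_card_dsupport, lp.norm_eq_card_dsupport, Nat.cast_le,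
      ← Set.ncard_eq_toFinset_card _ (lp.memℓp u).finite_dsupport,
      ← Set.ncard_eq_toFinset_card _ (lp.memℓp v).finite_dsupport]
    exact Set.ncard_le_ncard_of_injOn σ hmaps hσ.injOn (lp.memℓp v).finite_dsupport
  · exact lp.norm_le_of_forall_le (norm_nonneg v) fun k ↦
      (huv k).trans (lp.norm_apply_le_norm ENNReal.top_ne_zero v (σ k))
  · have hpow : ‖u‖ ^ p.toReal ≤ ‖v‖ ^ p.toReal :=
      hasSum_le_inj σ hσ (fun _ _ ↦ by positivity)
        (fun k ↦ Real.rpow_le_rpow (norm_nonneg _) (huv k) hp.le)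
        (lp.hasSum_norm hp u) (lp.hasSum_norm hp v)
    exact (Real.rpow_le_rpow_iff (lp.norm_nonneg' u) (lp.norm_nonneg' v) hp).1 hpow

theorem lp_norm_le_norm_of_comp_surjective {E : Type*} [NormedAddCommGroup E]
    {φ : ι → κ} (hφ : Function.Surjective φ)
    {u : lp (fun _ : κ ↦ E) p} {v : lp (fun _ : ι ↦ E) p} (huv : ∀ i, v i = u (φ i)) :
    ‖u‖ ≤ ‖v‖ :=
  lp_norm_le_norm_of_injective (Function.injective_surjInv hφ) fun k ↦ by
    rw [huv, Function.surjInv_eq hφ]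

end lpNorm

theorem bijective_adjoint_comp_self_of_antilipschitz {𝕜 E F : Type*} [RCLike 𝕜]
    [NormedAddCommGroup E] [InnerProductSpace 𝕜 E] [CompleteSpace E]
    [NormedAddCommGroup F] [InnerProductSpace 𝕜 F] [CompleteSpace F]
    {T : E →L[𝕜] F} {K : ℝ≥0} (hT : AntilipschitzWith K T) :
    Function.Bijective (ContinuousLinearMap.adjoint T ∘L T) := by
  -- The `+ 1` keeps the coercivity constant positive when `K = 0`.
  refine ContinuousLinearMap.isUnit_iff_bijective.1 <|
    ContinuousLinearMap.isUnit_of_forall_le_norm_inner_map _ (c := (K ^ 2 + 1)⁻¹) (by positivity)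
      fun x ↦ ?_
  have hx : ‖x‖ ^ 2 ≤ (K * ‖T x‖) ^ 2 := by
    gcongr
    exact T.bound_of_antilipschitz hT x
  calc ‖x‖ ^ 2 * ((K ^ 2 + 1)⁻¹ : ℝ≥0)
      ≤ ‖T x‖ ^ 2 := by
        push_cast
        rw [← div_eq_mul_inv, div_le_iff₀ (by positivity)]
        linarith [sq_nonneg ‖T x‖]
    _ = RCLike.re (inner 𝕜 ((ContinuousLinearMap.adjoint T ∘L T) x) x) :=
        T.apply_norm_sq_eq_inner_adjoint_left x
    _ ≤ ‖inner 𝕜 ((ContinuousLinearMap.adjoint T ∘L T) x) x‖ := RCLike.re_le_norm _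

theorem collatz_operator_injective_closed_range_adjoint_bijective_general
    {ι κ 𝕜 E : Type*} [RCLike 𝕜] [NormedAddCommGroup E] [InnerProductSpace 𝕜 E] [CompleteSpace E]
    {φ : ι → κ} (hφ : Function.Surjective φ)
    (T : lp (fun _ : κ ↦ E) 2 →L[𝕜] lp (fun _ : ι ↦ E) 2)
    (hT : ∀ (u : lp (fun _ : κ ↦ E) 2) (i : ι), T u i = u (φ i)) :
    Function.Injective T ∧ IsClosed (Set.range T) ∧
      Function.Bijective (ContinuousLinearMap.adjoint T ∘L T) := by
  have hbelow : AntilipschitzWith 1 T := T.antilipschitz_of_bound fun u ↦ by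
    simpa using lp_norm_le_norm_of_comp_surjective hφ (hT u)
  exact ⟨hbelow.injective, hbelow.isClosed_range T.uniformContinuous,
    bijective_adjoint_comp_self_of_antilipschitz hbelow⟩

/-- 𝐂 is injective with closed range, and 𝐂*𝐂 is bijective. -/
theorem collatz_operator_injective_closed_range_adjoint_bijective
    (α β : ℕ) (hα : Odd α) (hα0 : 0 < α) (hβ : Odd β) (hβ0 : 0 < β)
    (hgcd : Nat.gcd α β = 1) (C : ℕ → ℕ)
    (hC : ∀ n : ℕ, C n = if n % 2 = 0 then n / 2 else (α * n + β) / 2)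
    (T : lp (fun _ : ℕ => ℂ) 2 →L[ℂ] lp (fun _ : ℕ => ℂ) 2)
    (hT : ∀ (u : lp (fun _ : ℕ => ℂ) 2) (n : ℕ), T u n = u (C n)) :
    Function.Injective (⇑T) ∧ IsClosed (Set.range (⇑T)) ∧
    Function.Bijective (⇑(ContinuousLinearMap.adjoint T ∘L T)) := by
  have hC_two_mul : ∀ n, C (2 * n) = n := fun n ↦ by simp [hC]
  exact collatz_operator_injective_closed_range_adjoint_bijective_general
    (Function.RightInverse.surjective hC_two_mul) T hT
end

section
/- Let u₀ ∈ H and let u : ℝ → H be a continuous function satisfying u(t) = u₀ + ∫₀ᵗ 𝐂(u(s)) ds for all t ≥ 0. Let (n_j)_{j∈ℕ} be a sequence of positive integers with n_{j+1} = C(n_j) for all j, and assume the map j ↦ n_j is injective (a divergent Collatz orbit). Then for every j ∈ ℕ and every t ≥ 0, the coordinate of u(t) at index n_j is given by the absolutely convergent series (u(t))(n_j) = Σ_{k=0}^{∞} (u₀)(n_{j+k}) · t^k/k!. -/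
/-!
A continuous solution of `u t = u₀ + ∫₀ᵗ T (u s) ds` with `T` bounded solves the linear equation
`du/dt = T u`, so it is `exp (t T) u₀` by uniqueness and hence `∑ₖ (tᵏ / k!) Tᵏ u₀`, absolutely
convergent in norm. If `T` is composition with a self-map `f` of the index set, then `Tᵏ` moves a
coordinate `k` steps along its `f`-orbit, so reading off one coordinate of the exponential series
gives the claim.
-/

open Set NormedSpace
open scoped Nat ENNReal

section ExponentialSeries

variable {𝕜 X : Type*} [RCLike 𝕜] [NormedAddCommGroup X] [NormedSpace 𝕜 X]

theorem inv_factorial_smul_smul_pow_apply (A : X →L[𝕜] X) (x : X) (t : 𝕜) (k : ℕ) :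
    ((k !⁻¹ : 𝕜) • (t • A) ^ k) x = (t ^ k / k !) • (A ^ k) x := by
  rw [smul_pow, smul_smul, smul_apply, inv_mul_eq_div]

theorem summable_norm_pow_div_factorial_smul_pow_apply (A : X →L[𝕜] X) (x : X) (t : 𝕜) :
    Summable fun k : ℕ => ‖(t ^ k / k !) • (A ^ k) x‖ := by
  refine .of_nonneg_of_le (fun _ => norm_nonneg _) (fun k => ?_)
    ((norm_expSeries_summable' (𝕂 := 𝕜) (t • A)).mul_right ‖x‖)
  rw [← inv_factorial_smul_smul_pow_apply]
  exact ContinuousLinearMap.le_opNorm _ x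

variable [CompleteSpace X]

theorem hasSum_exp_smul_apply (A : X →L[𝕜] X) (x : X) (t : 𝕜) :
    HasSum (fun k : ℕ => (t ^ k / k !) • (A ^ k) x) (exp (t • A) x) := by
  simp only [← inv_factorial_smul_smul_pow_apply]
  exact (exp_series_hasSum_exp' (𝕂 := 𝕜) (t • A)).mapL (ContinuousLinearMap.apply 𝕜 X x)

theorem hasDerivAt_exp_smul_apply (A : X →L[𝕜] X) (x : X) (t : 𝕜) :
    HasDerivAt (fun s : 𝕜 => exp (s • A) x) (A (exp (t • A) x)) t := by
  simpa using (hasDerivAt_exp_smul_const' A t).clm_apply (hasDerivAt_const t x)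

end ExponentialSeries

theorem eqOn_exp_smul_apply_of_eq_add_integral {X : Type*} [NormedAddCommGroup X]
    [NormedSpace ℝ X] [CompleteSpace X] (A : X →L[ℝ] X) {u : ℝ → X} {x : X} {b : ℝ}
    (hu : ContinuousOn u (Icc 0 b))
    (hu_int : ∀ t ∈ Icc 0 b, u t = x + ∫ s in (0 : ℝ)..t, A (u s)) :
    EqOn u (fun t => exp (t • A) x) (Icc 0 b) := by
  rcases lt_or_ge b 0 with hb | hb
  · simp [Icc_eq_empty_of_lt hb]
  have initial_mem : (0 : ℝ) ∈ Icc 0 b := left_mem_Icc.2 hb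
  have u_zero : u 0 = x := by simpa using hu_int 0 initial_mem
  have u_deriv : ∀ t ∈ Icc 0 b, HasDerivWithinAt u (A (u t)) (Icc 0 b) t := fun t ht =>
    (ODE.hasDerivWithinAt_picard_Icc (f := fun _ => A) (u := univ) initial_mem
      (A.continuous.comp continuous_snd).continuousOn hu (fun _ _ => mem_univ _) x ht).congr
      hu_int (hu_int t ht)
  have exp_deriv := hasDerivAt_exp_smul_apply A x
  exact ODE_solution_unique (v := fun _ => A) (fun _ => A.lipschitz) hu
    (fun t ht => (u_deriv t (Ico_subset_Icc_self ht)).mono_of_mem_nhdsWithin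
      (Icc_mem_nhdsGE_of_mem ht))
    (fun t _ => (exp_deriv t).continuousAt.continuousWithinAt)
    (fun t _ => (exp_deriv t).hasDerivWithinAt) (by simp [u_zero])

section CompositionOperator

variable {ι E : Type*} [NormedAddCommGroup E] {p : ℝ≥0∞} [Fact (1 ≤ p)] {f : ι → ι}

theorem pow_apply_orbit_of_apply_eq_comp {𝕜 : Type*} [NormedField 𝕜] [NormedSpace 𝕜 E]
    {T : lp (fun _ : ι => E) p →L[𝕜] lp (fun _ : ι => E) p}
    (hT : ∀ v i, T v i = v (f i)) {x : ℕ → ι} (hx : ∀ j, x (j + 1) = f (x j)) (k j : ℕ)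
    (v : lp (fun _ : ι => E) p) :
    (T ^ k) v (x j) = v (x (j + k)) := by
  induction k generalizing v with
  | zero => simp
  | succ k ih => rw [pow_succ, mul_apply_eq_comp, ih, hT, ← hx, add_assoc]

theorem collatz_flow_divergent_orbit_series_general [NormedSpace ℝ E] [CompleteSpace E]
    {T : lp (fun _ : ι => E) p →L[ℝ] lp (fun _ : ι => E) p}
    (hT : ∀ v i, T v i = v (f i)) {u₀ : lp (fun _ : ι => E) p} {u : ℝ → lp (fun _ : ι => E) p}
    {t : ℝ} (ht : 0 ≤ t) (hu : ContinuousOn u (Icc 0 t))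
    (hu_int : ∀ s ∈ Icc 0 t, u s = u₀ + ∫ r in (0 : ℝ)..s, T (u r))
    {x : ℕ → ι} (hx : ∀ j, x (j + 1) = f (x j)) (j : ℕ) :
    Summable (fun k : ℕ => ‖(t ^ k / k !) • u₀ (x (j + k))‖) ∧
      HasSum (fun k : ℕ => (t ^ k / k !) • u₀ (x (j + k))) (u t (x j)) := by
  have coord_term (k : ℕ) :
      ((t ^ k / k !) • (T ^ k) u₀) (x j) = (t ^ k / k !) • u₀ (x (j + k)) := by
    rw [lp.coeFn_smul, Pi.smul_apply, pow_apply_orbit_of_apply_eq_comp hT hx]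
  have u_eq : u t = exp (t • T) u₀ :=
    eqOn_exp_smul_apply_of_eq_add_integral T hu hu_int (right_mem_Icc.2 ht)
  simp only [← coord_term, u_eq]
  constructor
  · exact (summable_norm_pow_div_factorial_smul_pow_apply T u₀ t).of_nonneg_of_le
      (fun _ => norm_nonneg _)
      (fun k => lp.norm_apply_le_norm (zero_lt_one.trans_le Fact.out).ne' _ (x j))
  · exact (hasSum_exp_smul_apply T u₀ t).mapL (lp.evalCLM ℝ (fun _ : ι => E) p (x j))

end CompositionOperator

/-- along a divergent Collatz orbit (n_j), the coordinates of a
solution of the Collatz flow are given by the absolutely convergent series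
(u(t))(n_j) = Σ_k (u₀)(n_{j+k}) t^k/k!. -/
theorem collatz_flow_divergent_orbit_series
    (α β : ℕ) (hα : Odd α) (hα0 : 0 < α) (hβ : Odd β) (hβ0 : 0 < β)
    (hgcd : Nat.gcd α β = 1) (C : ℕ → ℕ)
    (hC : ∀ n : ℕ, C n = if n % 2 = 0 then n / 2 else (α * n + β) / 2)
    (CZ : ℤ → ℤ) (hCZ : ∀ n : ℕ, CZ n = C n) (hCZodd : ∀ n : ℤ, CZ (-n) = -CZ n)
    (T : lp (fun _ : ℤ => ℂ) 2 →L[ℂ] lp (fun _ : ℤ => ℂ) 2)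
    (hT : ∀ (u : lp (fun _ : ℤ => ℂ) 2) (n : ℤ), T u n = u (CZ n))
    (u₀ : lp (fun _ : ℤ => ℂ) 2) (u : ℝ → lp (fun _ : ℤ => ℂ) 2)
    (hu : Continuous u)
    (huint : ∀ t : ℝ, 0 ≤ t → u t = u₀ + ∫ s in (0:ℝ)..t, T (u s))
    (nseq : ℕ → ℕ) (hpos : ∀ j, 0 < nseq j)
    (hiter : ∀ j, nseq (j + 1) = C (nseq j))
    (hinj : Function.Injective nseq)
    (j : ℕ) (t : ℝ) (ht : 0 ≤ t) :
    Summable (fun k : ℕ => ‖u₀ (nseq (j + k) : ℤ) * (t : ℂ) ^ k / (Nat.factorial k)‖) ∧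
    HasSum (fun k : ℕ => u₀ (nseq (j + k) : ℤ) * (t : ℂ) ^ k / (Nat.factorial k))
      (u t (nseq j : ℤ)) := by
  simpa [mul_comm (u₀ _), mul_div_right_comm] using
    collatz_flow_divergent_orbit_series_general (T := T.restrictScalars ℝ) hT ht hu.continuousOn
      (fun s hs => huint s hs.1) (x := fun j => (nseq j : ℤ)) (fun j => by rw [hiter, hCZ]) j
end
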